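/- A symmetric nonnegative matrix of order n ≤ 4 is completely positive if and only if it is positive semidefinite. -/

import Mathlib

/-- A real `n × n` matrix is completely positive if `C = B * Bᵀ` for some
entrywise nonnegative matrix `B`. -/
def IsCP {n : ℕ} (C : Matrix (Fin n) (Fin n) ℝ) : Prop :=
  ∃ (m : ℕ) (B : Matrix (Fin n) (Fin m) ℝ), (∀ i j, 0 ≤ B i j) ∧ C = B * B.transpose

/-!
A rank-one matrix `b bᵀ` with `b ≥ 0` can be split off a nonnegative positive semidefinite matrix
`A`, with a remainder that is again nonnegative and positive semidefinite, whenever `b = A y` lies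
in the range of `A` and is supported on a clique of the nonzero pattern of `A`: subtract the largest
admissible multiple of `b bᵀ`. Then either positive semidefiniteness becomes tight and the rank
drops, or nonnegativity becomes tight and a new zero entry appears. Such a `b` exists as soon as `A`
has corank at most one: the range then contains the orthogonal complement of some kernel vector
`x`, and the signs of `x` provide a vertex or an edge of the pattern supporting a nonnegative vector
orthogonal to `x`. In order at most four the process therefore only stops at rank at most two, where
the Gram vectors lie in a plane and pairwise make acute angles, so that they all fit in one
quadrant.
-/

open Matrix

namespace IsCP

variable {n : ℕ} {A B : Matrix (Fin n) (Fin n) ℝ}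

lemma posSemidef (hA : IsCP A) : A.PosSemidef := by
  obtain ⟨m, V, -, rfl⟩ := hA
  simpa using posSemidef_self_mul_conjTranspose V

lemma vecMulVec_self {b : Fin n → ℝ} (hb : 0 ≤ b) : IsCP (vecMulVec b b) :=
  ⟨1, replicateCol (Fin 1) b, fun i _ => hb i, vecMulVec_eq (Fin 1) b b⟩

lemma add (hA : IsCP A) (hB : IsCP B) : IsCP (A + B) := by
  obtain ⟨k, V, hV, rfl⟩ := hA
  obtain ⟨l, W, hW, rfl⟩ := hB
  refine ⟨k + l, (fromCols V W).submatrix id finSumFinEquiv.symm, fun i j => ?_, ?_⟩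
  · rw [submatrix_apply]
    exact Sum.rec (fun j => hV i j) (fun j => hW i j) (finSumFinEquiv.symm j)
  · rw [transpose_submatrix, submatrix_mul_equiv, transpose_fromCols, fromCols_mul_fromRows,
      submatrix_id_id]

lemma smul (hA : IsCP A) {t : ℝ} (ht : 0 ≤ t) : IsCP (t • A) := by
  obtain ⟨m, V, hV, rfl⟩ := hA
  refine ⟨m, √t • V, fun i j => mul_nonneg (Real.sqrt_nonneg t) (hV i j), ?_⟩
  rw [transpose_smul, Matrix.smul_mul, Matrix.mul_smul, smul_smul, Real.mul_self_sqrt ht]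

lemma zero : IsCP (0 : Matrix (Fin n) (Fin n) ℝ) :=
  ⟨0, 0, by simp, by simp⟩

end IsCP

namespace MaxfieldMinc

lemma smul_vecMulVec_self {ι : Type*} {t : ℝ} (ht : 0 ≤ t) (b : ι → ℝ) :
    t • vecMulVec b b = vecMulVec (√t • b) (√t • b) := by
  rw [smul_vecMulVec, vecMulVec_smul, smul_smul, Real.mul_self_sqrt ht]

section Wedderburn

variable {K m n : Type*} [Field K] [Fintype m] [Fintype n] (A : Matrix m n K)
  (x : m → K) (y : n → K) (t : K)

lemma rank_sub_smul_vecMulVec_le :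
    (A - t • vecMulVec (A *ᵥ y) (x ᵥ* A)).rank ≤ A.rank := by
  classical
  have factor : A - t • vecMulVec (A *ᵥ y) (x ᵥ* A) = A * (1 - t • vecMulVec y (x ᵥ* A)) := by
    rw [Matrix.mul_sub, Matrix.mul_one, Matrix.mul_smul, mul_vecMulVec]
  rw [factor]
  exact rank_mul_le_left _ _

variable {A x y t}

lemma rank_sub_smul_vecMulVec_lt (h : t * (x ⬝ᵥ A *ᵥ y) = 1) :
    (A - t • vecMulVec (A *ᵥ y) (x ᵥ* A)).rank < A.rank := by
  set A' := A - t • vecMulVec (A *ᵥ y) (x ᵥ* A) with hA'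
  have mulVec_eq (z : n → K) : A' *ᵥ z = A *ᵥ z - (t * (x ⬝ᵥ A *ᵥ z)) • A *ᵥ y := by
    rw [hA', sub_mulVec, smul_mulVec, vecMulVec_mulVec, op_smul_eq_smul, smul_smul,
      ← dotProduct_mulVec]
  have ker_lt : LinearMap.ker A.mulVecLin < LinearMap.ker A'.mulVecLin := by
    refine SetLike.lt_iff_le_and_exists.2 ⟨fun z hz => ?_, y, ?_, fun hy => ?_⟩
    · have hz : A *ᵥ z = 0 := hz
      simp [mulVec_eq, hz]
    · simp [mulVec_eq, h]
    · have hy : A *ᵥ y = 0 := hy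
      simp [hy] at h
  have nullity_lt := Submodule.finrank_lt_finrank_of_lt ker_lt
  have rank_nullity := A.mulVecLin.finrank_range_add_finrank_ker
  have rank_nullity' := A'.mulVecLin.finrank_range_add_finrank_ker
  unfold Matrix.rank
  lia

end Wedderburn

lemma exists_vecMul_eq_zero_and_forall_exists_mulVec_eq {K m n : Type*} [Field K] [Fintype m]
    [Fintype n] {A : Matrix m n K} (h : Fintype.card m ≤ A.rank + 1) :
    ∃ x, x ᵥ* A = 0 ∧ ∀ b, x ⬝ᵥ b = 0 → ∃ y, A *ᵥ y = b := by
  classical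
  let W := LinearMap.range A.mulVecLin
  have finrank_le_one : Module.finrank K W.dualAnnihilator ≤ 1 := by
    have finrank_add := Subspace.finrank_add_finrank_dualAnnihilator_eq W
    have rank_eq : A.rank = Module.finrank K W := rfl
    rw [Module.finrank_fintype_fun_eq_card] at finrank_add
    lia
  have : Module.Free K W.dualAnnihilator := Module.Free.of_divisionRing K W.dualAnnihilator
  obtain ⟨φ, span_φ⟩ := (Submodule.finrank_le_one_iff_isPrincipal _).1 finrank_le_one
  obtain ⟨x, rfl⟩ := (dotProductEquiv K m).surjective φ
  refine ⟨x, dotProduct_eq_zero_iff.1 fun y => ?_, fun b hb => ?_⟩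
  · have x_mem : dotProductEquiv K m x ∈ W.dualAnnihilator :=
      span_φ ▸ Submodule.mem_span_singleton_self _
    rw [← dotProduct_mulVec]
    exact (Submodule.mem_dualAnnihilator _).1 x_mem _ ⟨y, rfl⟩
  · refine (Subspace.forall_mem_dualAnnihilator_apply_eq_zero_iff W b).1 fun ψ hψ => ?_
    obtain ⟨c, rfl⟩ := Submodule.mem_span_singleton.1 (span_φ ▸ hψ)
    simp [hb]

lemma apply_self_ne_zero {ι : Type*} {A : Matrix ι ι ℝ} (hA : A.PosSemidef) {i j : ι}
    (h : A i j ≠ 0) : A i i ≠ 0 := by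
  intro hii
  have det_nonneg := (hA.submatrix ![i, j]).det_nonneg
  have symm : A j i = A i j := by simpa using hA.isHermitian.apply i j
  simp only [det_fin_two, submatrix_apply, cons_val_zero, cons_val_one, hii, symm] at det_nonneg
  nlinarith [mul_self_pos.2 h]

section PosSemidef

variable {ι : Type*} [Fintype ι] {A : Matrix ι ι ℝ}

lemma vecMul_eq_mulVec (hA : A.PosSemidef) (x : ι → ℝ) : x ᵥ* A = A *ᵥ x := by
  have hT : Aᵀ = A := by simpa using hA.isHermitian.eq
  rw [← mulVec_transpose, hT]

lemma dotProduct_mulVec_pos (hA : A.PosSemidef) {y : ι → ℝ} (hy : A *ᵥ y ≠ 0) :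
    0 < y ⬝ᵥ A *ᵥ y := by
  refine (hA.dotProduct_mulVec_nonneg y).lt_of_ne' fun h => hy ?_
  exact (hA.dotProduct_mulVec_zero_iff y).1 h

lemma dotProduct_mulVec_sq_le (hA : A.PosSemidef) (x y : ι → ℝ) :
    (x ⬝ᵥ A *ᵥ y) ^ 2 ≤ (x ⬝ᵥ A *ᵥ x) * (y ⬝ᵥ A *ᵥ y) := by
  classical
  have symm : (toLinearMap₂' ℝ A).IsSymm := ⟨fun u v => by
    simp only [toLinearMap₂'_apply', RingHom.id_apply]
    rw [dotProduct_mulVec, vecMul_eq_mulVec hA, dotProduct_comm]⟩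
  have nonneg (z : ι → ℝ) : 0 ≤ toLinearMap₂' ℝ A z z := by
    rw [toLinearMap₂'_apply']
    exact hA.dotProduct_mulVec_nonneg z
  simpa only [toLinearMap₂'_apply'] using
    LinearMap.BilinForm.apply_sq_le_of_symm _ nonneg symm x y

lemma posSemidef_sub_smul_vecMulVec_mulVec (hA : A.PosSemidef) {y : ι → ℝ} {t : ℝ} (ht : 0 ≤ t)
    (h : t * (y ⬝ᵥ A *ᵥ y) ≤ 1) : (A - t • vecMulVec (A *ᵥ y) (A *ᵥ y)).PosSemidef := by
  have rankOne : (vecMulVec (A *ᵥ y) (A *ᵥ y)).PosSemidef := by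
    simpa using posSemidef_vecMulVec_self_star (A *ᵥ y)
  refine .of_dotProduct_mulVec_nonneg (hA.isHermitian.sub (rankOne.smul ht).isHermitian) fun x => ?_
  have quadratic_form : x ⬝ᵥ (A - t • vecMulVec (A *ᵥ y) (A *ᵥ y)) *ᵥ x =
      x ⬝ᵥ A *ᵥ x - t * (x ⬝ᵥ A *ᵥ y) ^ 2 := by
    rw [sub_mulVec, smul_mulVec, vecMulVec_mulVec, op_smul_eq_smul, dotProduct_sub,
      dotProduct_smul, dotProduct_smul, dotProduct_comm (A *ᵥ y), smul_eq_mul, smul_eq_mul, sq]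
  rw [star_trivial, quadratic_form, sub_nonneg]
  calc t * (x ⬝ᵥ A *ᵥ y) ^ 2
      ≤ t * ((x ⬝ᵥ A *ᵥ x) * (y ⬝ᵥ A *ᵥ y)) := by gcongr; exact dotProduct_mulVec_sq_le hA x y
    _ = (x ⬝ᵥ A *ᵥ x) * (t * (y ⬝ᵥ A *ᵥ y)) := by ring
    _ ≤ x ⬝ᵥ A *ᵥ x := mul_le_of_le_one_right (hA.dotProduct_mulVec_nonneg x) h

lemma exists_pos_posSemidef_and_rank_lt (hA : A.PosSemidef) {y : ι → ℝ} (hy : A *ᵥ y ≠ 0) :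
    ∃ t : ℝ, 0 < t ∧
      (∀ s, 0 ≤ s → s ≤ t → (A - s • vecMulVec (A *ᵥ y) (A *ᵥ y)).PosSemidef) ∧
      (A - t • vecMulVec (A *ᵥ y) (A *ᵥ y)).rank < A.rank := by
  have hpos := dotProduct_mulVec_pos hA hy
  refine ⟨1 / (y ⬝ᵥ A *ᵥ y), one_div_pos.2 hpos, fun s hs0 hs => ?_, ?_⟩
  · exact posSemidef_sub_smul_vecMulVec_mulVec hA hs0 ((le_div_iff₀ hpos).1 hs)
  · have rank_lt := rank_sub_smul_vecMulVec_lt (one_div_mul_cancel hpos.ne')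
    rwa [vecMul_eq_mulVec hA] at rank_lt

lemma exists_eq_sum_vecMulVec_of_rank_le (hA : A.PosSemidef) {r : ℕ} (hr : A.rank ≤ r) :
    ∃ v : Fin r → ι → ℝ, A = ∑ k, vecMulVec (v k) (v k) := by
  induction r generalizing A with
  | zero =>
    have hA0 : A.mulVecLin = 0 :=
      LinearMap.range_eq_bot.1 (Submodule.finrank_eq_zero.1 (Nat.le_zero.1 hr))
    refine ⟨0, ext_iff_mulVec.2 fun x => ?_⟩
    simpa using LinearMap.congr_fun hA0 x
  | succ r ih =>
    by_cases hA0 : A = 0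
    · exact ⟨0, by simp [hA0]⟩
    obtain ⟨y, hy⟩ : ∃ y, A *ᵥ y ≠ 0 := by simpa using mt ext_iff_mulVec.2 hA0
    obtain ⟨t, ht, hpsd, rank_lt⟩ := exists_pos_posSemidef_and_rank_lt hA hy
    obtain ⟨v, hv⟩ := ih (hpsd t ht.le le_rfl) (by lia)
    refine ⟨Fin.cons (√t • A *ᵥ y) v, ?_⟩
    simp only [Fin.sum_univ_succ, Fin.cons_zero, Fin.cons_succ]
    rw [← hv, ← smul_vecMulVec_self ht.le, add_sub_cancel]

end PosSemidef

section RankTwo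

variable {K : Type*} [Field K] [LinearOrder K] [IsStrictOrderedRing K]

lemma cross_nonneg_trans {a₁ b₁ a₂ b₂ a₃ b₃ : K} (h₂ : 0 < a₂ ^ 2 + b₂ ^ 2)
    (dot₁₂ : 0 ≤ a₁ * a₂ + b₁ * b₂) (dot₂₃ : 0 ≤ a₂ * a₃ + b₂ * b₃)
    (cross₁₂ : 0 ≤ a₁ * b₂ - b₁ * a₂) (cross₂₃ : 0 ≤ a₂ * b₃ - b₂ * a₃) :
    0 ≤ a₁ * b₃ - b₁ * a₃ := by
  refine nonneg_of_mul_nonneg_right ?_ h₂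
  calc 0 ≤ (a₁ * b₂ - b₁ * a₂) * (a₂ * a₃ + b₂ * b₃)
        + (a₁ * a₂ + b₁ * b₂) * (a₂ * b₃ - b₂ * a₃) := by positivity
    _ = (a₂ ^ 2 + b₂ ^ 2) * (a₁ * b₃ - b₁ * a₃) := by ring

lemma exists_forall_cross_nonneg {κ : Type*} [Finite κ] [Nonempty κ] {a b : κ → K}
    (hpos : ∀ i, 0 < a i ^ 2 + b i ^ 2) (hdot : ∀ i j, 0 ≤ a i * a j + b i * b j) :
    ∃ p, ∀ i, 0 ≤ a p * b i - b p * a i := by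
  let r (i p : κ) : Prop := 0 ≤ a p * b i - b p * a i
  have : IsTrans κ r := ⟨fun i j k hij hjk =>
    cross_nonneg_trans (hpos j) (hdot k j) (hdot j i) hjk hij⟩
  have : Std.Total r := ⟨fun i j =>
    (le_total 0 (a j * b i - b j * a i)).imp id fun h => by grind⟩
  exact (Std.Total.directed (r := r) id).finite_le id

lemma isCP_vecMulVec_add_vecMulVec {n : ℕ} {a b : Fin n → ℝ}
    (hdot : ∀ i j, 0 ≤ a i * a j + b i * b j) : IsCP (vecMulVec a a + vecMulVec b b) := by
  let κ := {i // 0 < a i ^ 2 + b i ^ 2}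
  have eq_zero {i : Fin n} (hi : ¬ 0 < a i ^ 2 + b i ^ 2) : a i = 0 ∧ b i = 0 := by
    constructor <;> nlinarith [sq_nonneg (a i), sq_nonneg (b i)]
  rcases isEmpty_or_nonempty κ with hκ | hκ
  · have ha : a = 0 := funext fun i => (eq_zero fun hi => hκ.false ⟨i, hi⟩).1
    have hb : b = 0 := funext fun i => (eq_zero fun hi => hκ.false ⟨i, hi⟩).2
    simpa [ha, hb] using IsCP.zero
  obtain ⟨⟨p, hp⟩, hcross⟩ := exists_forall_cross_nonneg (κ := κ) (a := fun i => a i)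
    (b := fun i => b i) (fun i => i.2) fun i j => hdot i j
  have cross_nonneg (i : Fin n) : 0 ≤ a p * b i - b p * a i := by
    by_cases hi : 0 < a i ^ 2 + b i ^ 2
    · exact hcross ⟨i, hi⟩
    · simp [eq_zero hi]
  have rotate : vecMulVec a a + vecMulVec b b = (a p ^ 2 + b p ^ 2)⁻¹ •
      (vecMulVec (fun i => a p * a i + b p * b i) (fun i => a p * a i + b p * b i) +
        vecMulVec (fun i => a p * b i - b p * a i) (fun i => a p * b i - b p * a i)) := by
    rw [eq_inv_smul_iff₀ hp.ne']
    ext i j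
    simp only [Matrix.smul_apply, Matrix.add_apply, vecMulVec_apply, smul_eq_mul]
    ring
  rw [rotate]
  exact ((IsCP.vecMulVec_self fun i => hdot p i).add
    (IsCP.vecMulVec_self cross_nonneg)).smul (inv_nonneg.2 hp.le)

lemma isCP_of_rank_le_two {n : ℕ} {A : Matrix (Fin n) (Fin n) ℝ} (hA : A.PosSemidef)
    (hnn : ∀ i j, 0 ≤ A i j) (hr : A.rank ≤ 2) : IsCP A := by
  obtain ⟨v, rfl⟩ := exists_eq_sum_vecMulVec_of_rank_le hA hr
  rw [Fin.sum_univ_two] at hnn ⊢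
  exact isCP_vecMulVec_add_vecMulVec hnn

end RankTwo

section Reduction

variable {K : Type*} [Field K] [LinearOrder K] [IsStrictOrderedRing K]

/-- The nonzero pattern of a matrix, as a set of positions. -/
def entrySupport {m n α : Type*} [Zero α] (A : Matrix m n α) : Set (m × n) :=
  {p | A p.1 p.2 ≠ 0}

lemma mem_entrySupport {m n α : Type*} [Zero α] {A : Matrix m n α} {i : m} {j : n} :
    (i, j) ∈ entrySupport A ↔ A i j ≠ 0 :=
  Iff.rfl

lemma exists_ne_zero_and_mul_nonpos_of_dotProduct_eq_zero {ι : Type*} [Fintype ι] {a x : ι → K}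
    (ha : 0 ≤ a) (ha0 : a ≠ 0) (hax : a ⬝ᵥ x = 0) (c : K) : ∃ j, a j ≠ 0 ∧ c * x j ≤ 0 := by
  by_contra! hpos
  obtain ⟨k, hk⟩ := Function.ne_iff.1 ha0
  have sum_eq_zero : ∑ j, a j * (c * x j) = 0 := by
    simp only [mul_left_comm _ c, ← Finset.mul_sum]
    exact mul_eq_zero_of_right c hax
  have term_nonneg (j : ι) : 0 ≤ a j * (c * x j) := by
    by_cases hj : a j = 0
    · simp [hj]
    · exact mul_nonneg (ha j) (hpos j hj).le
  have term_pos : 0 < a k * (c * x k) := mul_pos ((ha k).lt_of_ne' hk) (hpos k hk)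
  exact (Finset.sum_pos' (fun j _ => term_nonneg j) ⟨k, Finset.mem_univ k, term_pos⟩).ne'
    sum_eq_zero

lemma exists_nonneg_combination_eq_zero {s t : K} (h : s * t ≤ 0) :
    ∃ α β : K, 0 ≤ α ∧ 0 ≤ β ∧ 0 < α + β ∧ α * s + β * t = 0 := by
  by_cases hst : s = 0 ∧ t = 0
  · exact ⟨1, 1, by simp [hst]⟩
  refine ⟨|t|, |s|, abs_nonneg t, abs_nonneg s, ?_, ?_⟩
  · have : 0 < |s| ∨ 0 < |t| := by simpa only [abs_pos, ← not_and_or] using hst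
    grind
  · rcases mul_nonpos_iff.1 h with ⟨hs, ht⟩ | ⟨hs, ht⟩
    · rw [abs_of_nonneg hs, abs_of_nonpos ht]; ring
    · rw [abs_of_nonpos hs, abs_of_nonneg ht]; ring

lemma exists_nonneg_dotProduct_eq_zero_and_entrySupport_subset {ι : Type*} [Fintype ι]
    {A : Matrix ι ι ℝ} (hA : A.PosSemidef) (hnn : ∀ i j, 0 ≤ A i j) (hA0 : A ≠ 0)
    {x : ι → ℝ} (hx : A *ᵥ x = 0) :
    ∃ b, 0 ≤ b ∧ b ≠ 0 ∧ x ⬝ᵥ b = 0 ∧ entrySupport (vecMulVec b b) ⊆ entrySupport A := by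
  classical
  obtain ⟨i, hi⟩ : ∃ i, A.row i ≠ 0 := Function.ne_iff.1 hA0
  obtain ⟨j, (hij : A i j ≠ 0), hxij⟩ := exists_ne_zero_and_mul_nonpos_of_dotProduct_eq_zero
    (hnn i) hi (congrFun hx i) (x i)
  obtain ⟨α, β, hα, hβ, hαβ, hcomb⟩ := exists_nonneg_combination_eq_zero hxij
  have hji : A j i ≠ 0 := by
    rwa [← hA.isHermitian.apply, star_trivial]
  refine ⟨Pi.single i α + Pi.single j β,
    add_nonneg (Pi.single_nonneg.2 hα) (Pi.single_nonneg.2 hβ), fun hb => hαβ.ne' ?_, ?_, ?_⟩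
  · simpa [Finset.sum_add_distrib] using congrArg (fun b => ∑ k, b k) hb
  · rw [dotProduct_add, dotProduct_single, dotProduct_single, mul_comm, mul_comm (x j), hcomb]
  · have eq_or_eq {k : ι} (hk : (Pi.single i α + Pi.single j β : ι → ℝ) k ≠ 0) :
        k = i ∨ k = j := by
      by_contra! h
      simp [h.1, h.2] at hk
    rintro ⟨k, l⟩ hkl
    rw [mem_entrySupport, vecMulVec_apply] at hkl
    rw [mem_entrySupport]
    rcases eq_or_eq (left_ne_zero_of_mul hkl) with rfl | rfl <;>
      rcases eq_or_eq (right_ne_zero_of_mul hkl) with rfl | rfl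
    exacts [apply_self_ne_zero hA hij, hij, hji, apply_self_ne_zero hA hji]

lemma exists_smul_le_and_eq {κ : Type*} [Finite κ] {f g : κ → K} (hf : 0 ≤ f) (hg : 0 ≤ g)
    (hg0 : g ≠ 0) : ∃ t : K, 0 ≤ t ∧ t • g ≤ f ∧ ∃ k, g k ≠ 0 ∧ t * g k = f k := by
  obtain ⟨k, hk, hmin⟩ := Set.exists_min_image (Function.support g) (fun k => f k / g k)
    (Set.toFinite _) (Function.support_nonempty_iff.2 hg0)
  refine ⟨f k / g k, div_nonneg (hf k) (hg k), fun l => ?_, k, hk, div_mul_cancel₀ _ hk⟩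
  rw [Pi.smul_apply, smul_eq_mul]
  by_cases hl : g l = 0
  · simpa [hl] using hf l
  · exact (le_div_iff₀ ((hg l).lt_of_ne' hl)).1 (hmin l hl)

lemma entrySupport_sub_smul_subset {m n R : Type*} [Ring R] {A B : Matrix m n R}
    (h : entrySupport B ⊆ entrySupport A) (t : R) :
    entrySupport (A - t • B) ⊆ entrySupport A := by
  rintro ⟨i, j⟩ hij
  by_contra hA
  have hB : (i, j) ∉ entrySupport B := mt (@h _) hA
  rw [mem_entrySupport, not_not] at hA hB
  simp [mem_entrySupport, hA, hB] at hij

lemma exists_posSemidef_sub_vecMulVec {ι : Type*} [Fintype ι] {A : Matrix ι ι ℝ}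
    (hA : A.PosSemidef) (hnn : ∀ i j, 0 ≤ A i j) (hA0 : A ≠ 0)
    (hr : Fintype.card ι ≤ A.rank + 1) :
    ∃ b, 0 ≤ b ∧ (A - vecMulVec b b).PosSemidef ∧ (∀ i j, 0 ≤ (A - vecMulVec b b) i j) ∧
      (A - vecMulVec b b).rank + (entrySupport (A - vecMulVec b b)).ncard <
        A.rank + (entrySupport A).ncard := by
  obtain ⟨x, hx, range_of_orthogonal⟩ := exists_vecMul_eq_zero_and_forall_exists_mulVec_eq hr
  rw [vecMul_eq_mulVec hA] at hx
  obtain ⟨b, hb, hb0, hxb, hsupp⟩ :=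
    exists_nonneg_dotProduct_eq_zero_and_entrySupport_subset hA hnn hA0 hx
  obtain ⟨y, rfl⟩ := range_of_orthogonal b hxb
  set b := A *ᵥ y
  obtain ⟨t₁, ht₁, hpsd, rank_lt⟩ := exists_pos_posSemidef_and_rank_lt hA hb0
  obtain ⟨t₂, ht₂, entry_le, ⟨i, j⟩, hij, entry_eq⟩ :=
    exists_smul_le_and_eq (f := fun p : ι × ι => A p.1 p.2) (g := fun p => b p.1 * b p.2)
      (fun p => hnn p.1 p.2) (fun p => mul_nonneg (hb p.1) (hb p.2))
      (by obtain ⟨i, hi⟩ := Function.ne_iff.1 hb0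
          exact Function.ne_iff.2 ⟨(i, i), mul_ne_zero hi hi⟩)
  have ht : 0 ≤ min t₁ t₂ := le_min ht₁.le ht₂
  refine ⟨√(min t₁ t₂) • b, smul_nonneg (Real.sqrt_nonneg _) hb, ?_⟩
  rw [← smul_vecMulVec_self ht]
  refine ⟨hpsd _ ht (min_le_left _ _), fun k l => sub_nonneg.2 ?_, ?_⟩
  · calc min t₁ t₂ * (b k * b l)
        ≤ t₂ * (b k * b l) :=
          mul_le_mul_of_nonneg_right (min_le_right _ _) (mul_nonneg (hb k) (hb l))
      _ ≤ A k l := entry_le (k, l)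
  have support_subset := entrySupport_sub_smul_subset hsupp (min t₁ t₂)
  rcases le_total t₁ t₂ with h | h
  · rw [min_eq_left h] at support_subset ⊢
    exact add_lt_add_of_lt_of_le rank_lt (Set.ncard_le_ncard support_subset)
  · rw [min_eq_right h] at support_subset ⊢
    have rank_le := rank_sub_smul_vecMulVec_le A y y t₂
    rw [vecMul_eq_mulVec hA] at rank_le
    refine add_lt_add_of_le_of_lt rank_le (Set.ncard_lt_ncard ?_)
    exact (Set.ssubset_iff_of_subset support_subset).2
      ⟨(i, j), hsupp hij, fun hmem => hmem (sub_eq_zero.2 entry_eq.symm)⟩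

end Reduction

lemma isCP_of_posSemidef_of_order_le_four {n : ℕ} (hn : n ≤ 4) {A : Matrix (Fin n) (Fin n) ℝ}
    (hA : A.PosSemidef) (hnn : ∀ i j, 0 ≤ A i j) : IsCP A := by
  induction h : A.rank + (entrySupport A).ncard using Nat.strong_induction_on generalizing A with
  | _ N ih =>
    rcases le_or_gt A.rank 2 with hr | hr
    · exact isCP_of_rank_le_two hA hnn hr
    have hA0 : A ≠ 0 := by
      rintro rfl
      simp at hr
    obtain ⟨b, hb, hpsd, hnn', hlt⟩ := exists_posSemidef_sub_vecMulVec hA hnn hA0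
      (by rw [Fintype.card_fin]; lia)
    rw [← sub_add_cancel A (vecMulVec b b)]
    exact (ih _ (h ▸ hlt) hpsd hnn' rfl).add (IsCP.vecMulVec_self hb)

end MaxfieldMinc

/-- Maxfield–Minc: a symmetric entrywise nonnegative matrix of order `n ≤ 4`
is completely positive if and only if it is positive semidefinite. -/
theorem cp_iff_psd_of_order_le_four {n : ℕ} (hn : n ≤ 4)
    (C : Matrix (Fin n) (Fin n) ℝ) (hsym : C.IsSymm) (hnn : ∀ i j, 0 ≤ C i j) :
    IsCP C ↔ C.PosSemidef :=
  ⟨IsCP.posSemidef, fun hC => MaxfieldMinc.isCP_of_posSemidef_of_order_le_four hn hC hnn⟩
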